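/- arXiv:2407.13636 — 3 statements merged into one kernel-verified Lean document; each statement's English description precedes it below -/
import Mathlib

section
/- For every l ∈ [0, s] the sieve formula holds: the alternating sum over all non-empty subsets I ⊆ [0, l] of (-1)^{|I|+1} · N(s−I) is congruent to 1 modulo p^{l+1}. -/
/-- `chainCount G p s I` is the number `N(s - I)` of chains of `p`-subgroups of `G`:
for `I = {c₁ > c₂ > … > c_k} ⊆ [0, s]`, this counts tuples `U₁ ≤ U₂ ≤ … ≤ U_k ≤ G`
with `|U_i| = p^(s - c_i)`.  Formally, a chain is a function `f` on `I` which is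
antitone (larger `c` gives the smaller subgroup) with `|f c| = p^(s - c)`. -/
noncomputable def chainCount (G : Type*) [Group G] (p s : ℕ) (I : Finset ℕ) : ℕ :=
  Nat.card {f : I → Subgroup G //
    (∀ i j : I, (i : ℕ) ≤ (j : ℕ) → f j ≤ f i) ∧
    ∀ i : I, Nat.card (f i) = p ^ (s - (i : ℕ))}

/-!
Let `s = m + l`, and let `w` be the Möbius inversion, on the subgroup lattice, of the indicator
function of `{V | p ^ m ∣ |V|}`. Peeling off the largest group of a chain, i.e. the smallest element
of `I`, shows that the sum of `(-1) ^ |I| * N(s - I)` over all `I ⊆ [0, l]` is `1 - ∑ w U`, where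
`U` runs over the subgroups whose order divides `p ^ s`. So the claim is that `∑ w U` is
congruent to `1` modulo `p ^ (l + 1)`.

As in Wielandt's proof of Sylow's theorem, let `G` act on its subsets of size `p ^ s`. The subsets
whose stabilizer has order not divisible by `p ^ m` lie in large orbits, and the subsets stable
under `U` are the unions of cosets of `U`. Hence, if `p ^ (τ + s)` divides `|G|`,
`|G|.choose (p ^ s) ≡ ∑ w U * |G : U|.choose (p ^ s / |U|) (mod p ^ (τ + l + 1))`.
For the cyclic group of the same order, `w` is concentrated on the subgroup of order `p ^ m`. This
makes the binomial coefficients for different `U` congruent to each other, modulo a power of `p`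
whose exponent falls short by `j` if `|U| = p ^ (m + j)`. By induction, the theorem for `U` itself
gives `p ^ j ∣ w U`, which makes up for the loss. Finally the common binomial coefficient cancels,
being `p ^ τ` times an integer prime to `p` if `p ^ (τ + s)` is the full power of `p` in `|G|`.
-/

section

open Finset MulAction
open scoped Classical Pointwise

attribute [local instance] Fintype.ofFinite

/-! ### Group actions and finite subsets -/

theorem dvd_sum_of_dvd_mul_index_stabilizer {G A R : Type*} [Group G] [Finite A]
    [MulAction G A] [CommSemiring R] {M : R} {f : A → R} (hf : ∀ (g : G) a, f (g • a) = f a)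
    (hM : ∀ a, M ∣ f a * (stabilizer G a).index) : M ∣ ∑ a, f a := by
  rw [← (selfEquivSigmaOrbits G A).symm.sum_comp, Fintype.sum_sigma]
  refine dvd_sum fun ω _ ↦ ?_
  have hconst : ∀ x : orbit G ω.out, f ((selfEquivSigmaOrbits G A).symm ⟨ω, x⟩) = f ω.out := by
    rintro ⟨_, g, rfl⟩
    exact hf g _
  rw [sum_congr rfl fun x _ ↦ hconst x, sum_const, card_univ, ← Nat.card_eq_fintype_card,
    nsmul_eq_mul, mul_comm, Nat.card_coe_set_eq, ← index_stabilizer]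
  exact hM _

theorem stabilizer_coe_powersetCard {G : Type*} [Group G] {k : ℕ} (X : Set.powersetCard G k) :
    stabilizer G (X : Finset G) = stabilizer G X := by
  rw [Set.powersetCard.stabilizer_coe, ← stabilizer_coe_finset, Set.powersetCard.coe_coe]

/-- The union of the right cosets of `U` that are the inverses of the left cosets in `S`; these
are the finite subsets of `G` stable under left multiplication by `U`. -/
noncomputable def cosetUnion {G : Type*} [Group G] [Finite G] (U : Subgroup G)
    (S : Finset (G ⧸ U)) : Finset G :=
  {x | QuotientGroup.mk x⁻¹ ∈ S}

section cosetUnion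

variable {G : Type*} [Group G] [Finite G] (U : Subgroup G)

theorem mem_cosetUnion {S : Finset (G ⧸ U)} {x : G} :
    x ∈ cosetUnion U S ↔ QuotientGroup.mk x⁻¹ ∈ S := by
  simp [cosetUnion]

theorem card_cosetUnion (S : Finset (G ⧸ U)) : #(cosetUnion U S) = #S * Nat.card U := by
  have h : (cosetUnion U S : Set G) = (QuotientGroup.mk ⁻¹' (S : Set (G ⧸ U)))⁻¹ := by
    ext x
    simp [mem_cosetUnion]
  rw [← Set.ncard_coe_finset, ← Nat.card_coe_set_eq, h, Set.natCard_inv,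
    QuotientGroup.card_preimage_mk, Nat.card_coe_set_eq, Set.ncard_coe_finset, mul_comm]

theorem cosetUnion_injective : Function.Injective (cosetUnion U) := by
  intro S T h
  ext q
  obtain ⟨g, rfl⟩ := QuotientGroup.mk_surjective q
  simpa [mem_cosetUnion] using Finset.ext_iff.1 h g⁻¹

theorem le_stabilizer_cosetUnion (S : Finset (G ⧸ U)) : U ≤ stabilizer G (cosetUnion U S) := by
  intro u hu
  rw [mem_stabilizer_finset]
  intro x
  have h : (QuotientGroup.mk (u • x)⁻¹ : G ⧸ U) = QuotientGroup.mk x⁻¹ := by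
    simpa [QuotientGroup.eq] using hu
  rw [mem_cosetUnion, mem_cosetUnion, h]

theorem exists_cosetUnion_eq {U : Subgroup G} {X : Finset G} (hX : U ≤ stabilizer G X) :
    ∃ S, cosetUnion U S = X := by
  refine ⟨X.image fun x ↦ QuotientGroup.mk x⁻¹, ext fun x ↦ ?_⟩
  rw [mem_cosetUnion, mem_image]
  refine ⟨?_, fun hx ↦ ⟨x, hx, rfl⟩⟩
  rintro ⟨y, hy, hyx⟩
  have hmem : y * x⁻¹ ∈ U := by simpa [QuotientGroup.eq] using hyx
  simpa using mem_stabilizer_finset'.1 (inv_mem (hX hmem)) hy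

theorem card_stabilizer_dvd_card (X : Finset G) : Nat.card (stabilizer G X) ∣ #X := by
  obtain ⟨S, hS⟩ := exists_cosetUnion_eq (le_refl (stabilizer G X))
  exact ⟨#S, by rw [mul_comm, ← card_cosetUnion, hS]⟩

theorem card_powersetCard_le_stabilizer (m : ℕ) :
    Nat.card {X : Set.powersetCard G (m * Nat.card U) // U ≤ stabilizer G X} =
      U.index.choose m := by
  have hcard (S : Set.powersetCard (G ⧸ U) m) :
      #(cosetUnion U (S : Finset (G ⧸ U))) = m * Nat.card U := by
    rw [card_cosetUnion, Set.powersetCard.card_eq]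
  rw [Subgroup.index, ← Set.powersetCard.card]
  refine (Nat.card_congr (Equiv.ofBijective (fun S : Set.powersetCard (G ⧸ U) m ↦
    (⟨⟨_, hcard S⟩, ?_⟩ : {X : Set.powersetCard G (m * Nat.card U) // U ≤ stabilizer G X}))
    ⟨?_, ?_⟩)).symm
  · rw [← stabilizer_coe_powersetCard]
    exact le_stabilizer_cosetUnion U S
  · intro S T h
    exact Subtype.ext (cosetUnion_injective U (congrArg (fun X ↦ (X.1 : Finset G)) h))
  · rintro ⟨X, hX⟩
    rw [← stabilizer_coe_powersetCard] at hX
    obtain ⟨S, hS⟩ := exists_cosetUnion_eq hX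
    have hSm : #S = m := by
      refine Nat.eq_of_mul_eq_mul_right (Nat.card_pos (α := U)) ?_
      rw [← card_cosetUnion, hS, Set.powersetCard.card_eq]
    exact ⟨⟨S, hSm⟩, Subtype.ext (Subtype.ext hS)⟩

end cosetUnion

/-! ### Orders of subgroups and sums over subgroups -/

theorem card_mem_properDivisors_iff_lt_top {G : Type*} [Group G] [Finite G] (U : Subgroup G) :
    Nat.card U ∈ (Nat.card G).properDivisors ↔ U < ⊤ := by
  rw [Nat.mem_properDivisors, and_iff_right U.card_subgroup_dvd_card, lt_top_iff_ne_top,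
    U.card_le_card_group.lt_iff_ne, Ne, Subgroup.card_eq_iff_eq_top]

theorem mem_properDivisors_prime_pow_succ {p k x : ℕ} (hp : p.Prime) :
    x ∈ (p ^ (k + 1)).properDivisors ↔ x ∣ p ^ k := by
  simp only [Nat.mem_properDivisors_prime_pow hp, Nat.dvd_prime_pow hp, Nat.lt_succ_iff,
    exists_prop]

theorem sum_card_mem_properDivisors_prime_pow_succ {G M : Type*} [Group G] [Finite G]
    [AddCommMonoid M] {p k : ℕ} (hp : p.Prime) (F : Subgroup G → M) :
    ∑ U with Nat.card (U : Subgroup G) ∈ (p ^ (k + 1)).properDivisors, F U =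
      ∑ U with Nat.card (U : Subgroup G) ∈ (p ^ k).properDivisors, F U +
        ∑ U with Nat.card (U : Subgroup G) = p ^ k, F U := by
  have hpk : p ^ k ≠ 0 := pow_ne_zero k hp.ne_zero
  rw [← sum_union (disjoint_filter.2 fun U _ hU h ↦ (Nat.mem_properDivisors.1 hU).2.ne h),
    ← filter_or]
  congr! 2 with U
  rw [mem_properDivisors_prime_pow_succ hp, or_comm, ← mem_insert,
    Nat.insert_self_properDivisors hpk, Nat.mem_divisors, and_iff_left hpk]

theorem index_eq_of_card_eq_prime_pow {G : Type*} [Group G] {U : Subgroup G} {p a i n : ℕ}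
    (hp : p.Prime) (hU : Nat.card U = p ^ a) (hG : Nat.card G = p ^ (a + i) * n) :
    U.index = p ^ i * n := by
  rw [← U.card_mul_index, hU, pow_add, mul_assoc] at hG
  exact Nat.eq_of_mul_eq_mul_left (pow_pos hp.pos a) hG

theorem sum_subgroup_map_subtype {G M : Type*} [Group G] [Finite G] [AddCommMonoid M]
    (H : Subgroup G) (F : Subgroup G → M) :
    ∑ U : Subgroup H, F (U.map H.subtype) = ∑ U with U ≤ H, F U := by
  rw [sum_subtype (p := (· ≤ H)) _ (by simp), ← (Subgroup.MapSubtype.orderIso H).toEquiv.sum_comp]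
  rfl

theorem sum_le_eq_sum_lt_add {α M : Type*} [PartialOrder α] [Finite α] [AddCommMonoid M]
    (f : α → M) (a : α) : ∑ x with x ≤ a, f x = ∑ x with x < a, f x + f a := by
  have h : univ.filter (· ≤ a) = insert a (univ.filter (· < a)) := by
    ext x
    simp [le_iff_eq_or_lt]
  rw [h, sum_insert (by simp), add_comm]

/-! ### Sieve weights -/

/-- `w` is the Möbius inversion, on the subgroup lattice, of the indicator function of the subgroups
of order divisible by `d`. For `d = p ^ (s - l)` these weights express the alternating sum over
`I ⊆ [0, l]` of the chain counts. -/
def IsSieveWeight {G : Type*} [Group G] [Finite G] (d : ℕ) (w : Subgroup G → ℤ) : Prop :=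
  ∀ V, ∑ U with U ≤ V, w U = if d ∣ Nat.card V then 1 else 0

/-- The unique sieve weight for `d`, given by the recursion implicit in `IsSieveWeight`. -/
noncomputable def sieveWeight {G : Type*} [Group G] [Finite G] (d : ℕ) (V : Subgroup G) : ℤ :=
  (if d ∣ Nat.card V then 1 else 0) - ∑ U : {U // U < V}, sieveWeight d U.1
termination_by wellFounded_lt.wrap V
decreasing_by exact U.2

theorem isSieveWeight_sieveWeight {G : Type*} [Group G] [Finite G] (d : ℕ) :
    IsSieveWeight d (sieveWeight (G := G) d) := by
  intro V
  rw [sum_le_eq_sum_lt_add, sieveWeight, sum_subtype (p := (· < V)) _ (by simp)]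
  abel

namespace IsSieveWeight

variable {G : Type*} [Group G] [Finite G] {d : ℕ} {w : Subgroup G → ℤ}

theorem map_subtype (hw : IsSieveWeight d w) (H : Subgroup G) :
    IsSieveWeight d fun U : Subgroup H ↦ w (U.map H.subtype) := by
  intro V
  rw [← Subgroup.card_map_of_injective H.subtype_injective, ← hw]
  have h := sum_subgroup_map_subtype H fun U ↦ if U ≤ V.map H.subtype then w U else 0
  simp only [Subgroup.map_subtype_le_map_subtype] at h
  rw [sum_filter, h, ← sum_filter, filter_filter]
  congr! 2 with U
  exact and_iff_right_of_imp (·.trans (Subgroup.map_subtype_le V))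

theorem sum_lt (hw : IsSieveWeight d w) (V : Subgroup G) :
    ∑ U with U < V, w U = (if d ∣ Nat.card V then 1 else 0) - w V := by
  rw [← hw V, sum_le_eq_sum_lt_add, add_sub_cancel_right]

theorem eq_zero (hw : IsSieveWeight d w) {V : Subgroup G} (hV : ¬ d ∣ Nat.card V) : w V = 0 := by
  induction V using WellFoundedLT.induction with
  | ind V ih =>
    have h := hw.sum_lt V
    rw [if_neg hV, sum_eq_zero] at h
    · linarith
    · intro U hU
      have hUV := (mem_filter.1 hU).2
      exact ih U hUV fun hd ↦ hV (hd.trans (Subgroup.card_dvd_of_le hUV.le))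

theorem card_modEq_sum_mul_card (hw : IsSieveWeight d w) {A : Type*} [Finite A] [MulAction G A]
    {M : ℕ} (hM : ∀ a : A, ¬ d ∣ Nat.card (stabilizer G a) → M ∣ (stabilizer G a).index) :
    (Nat.card A : ℤ) ≡ ∑ U, w U * Nat.card {a : A // U ≤ stabilizer G a} [ZMOD M] := by
  have hswap : ∑ U, w U * Nat.card {a : A // U ≤ stabilizer G a} =
      ∑ a : A, if d ∣ Nat.card (stabilizer G a) then 1 else 0 := by
    simp_rw [← hw (stabilizer G _), sum_filter]
    rw [sum_comm]
    refine sum_congr rfl fun U _ ↦ ?_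
    rw [← sum_filter, sum_const, nsmul_eq_mul, mul_comm, Nat.card_eq_fintype_card,
      Fintype.card_subtype]
  have hcard : (Nat.card A : ℤ) = ∑ a : A, 1 := by simp
  rw [hswap, hcard, Int.modEq_comm, Int.modEq_iff_dvd, ← sum_sub_distrib]
  refine dvd_sum_of_dvd_mul_index_stabilizer (G := G) (fun g a ↦ ?_) fun a ↦ ?_
  · rw [stabilizer_smul_eq_stabilizer_map_conj,
      Subgroup.card_map_of_injective (MulAut.conj g).injective]
  · split_ifs with h
    · simp
    · simpa using Int.natCast_dvd_natCast.2 (hM a h)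

theorem choose_modEq_sum (hw : IsSieveWeight d w) {k M : ℕ}
    (hM : ∀ V : Subgroup G, Nat.card V ∣ k → ¬ d ∣ Nat.card V → M ∣ V.index) :
    ((Nat.card G).choose k : ℤ) ≡
      ∑ U with Nat.card (U : Subgroup G) ∣ k,
        w U * (U.index.choose (k / Nat.card U) : ℕ) [ZMOD M] := by
  have hstab (X : Set.powersetCard G k) : Nat.card (stabilizer G X) ∣ k := by
    have h := card_stabilizer_dvd_card (X : Finset G)
    rwa [stabilizer_coe_powersetCard, Set.powersetCard.card_eq] at h
  have h := hw.card_modEq_sum_mul_card (A := Set.powersetCard G k) fun X ↦ hM _ (hstab X)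
  rw [Set.powersetCard.card] at h
  convert h using 1
  rw [sum_filter]
  refine sum_congr rfl fun U _ ↦ ?_
  split_ifs with hU
  · obtain ⟨m, rfl⟩ := hU
    rw [Nat.mul_div_cancel_left _ Nat.card_pos, mul_comm (Nat.card U),
      card_powersetCard_le_stabilizer]
  · have : IsEmpty {X : Set.powersetCard G k // U ≤ stabilizer G X} :=
      ⟨fun X ↦ hU ((Subgroup.card_dvd_of_le X.2).trans (hstab X))⟩
    simp

theorem sum_properDivisors (hw : IsSieveWeight d w) :
    ∑ U with Nat.card (U : Subgroup G) ∈ (Nat.card G).properDivisors, w U =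
      (if d ∣ Nat.card G then 1 else 0) - w ⊤ := by
  have h := hw.sum_lt ⊤
  rw [Subgroup.card_top] at h
  rw [← h]
  congr! 2 with U
  exact card_mem_properDivisors_iff_lt_top U

theorem choose_modEq_sum_prime_pow {p τ m l n : ℕ} (hp : p.Prime)
    (hG : Nat.card G = p ^ (τ + m + l) * n) (hw : IsSieveWeight (p ^ m) w) :
    ((Nat.card G).choose (p ^ (m + l)) : ℤ) ≡
      ∑ U with Nat.card (U : Subgroup G) ∣ p ^ (m + l),
        w U * (U.index.choose (p ^ (m + l) / Nat.card U) : ℕ) [ZMOD p ^ (τ + l + 1)] := by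
  rw [← Nat.cast_pow]
  refine hw.choose_modEq_sum fun V hV hmV ↦ ?_
  obtain ⟨a, -, ha⟩ := (Nat.dvd_prime_pow hp).1 hV
  have ham : a < m := by
    by_contra! h
    exact hmV (ha ▸ pow_dvd_pow p h)
  rw [index_eq_of_card_eq_prime_pow (i := τ + m + l - a) (n := n) hp ha
    (by rw [hG]; congr 2; omega)]
  exact Dvd.dvd.mul_right (pow_dvd_pow p (by omega)) n

end IsSieveWeight

/-! ### Cyclic groups and binomial coefficients -/

theorem powMonoidHom_ker_le_iff {C : Type*} [CommGroup C] [Finite C] [IsCyclic C] {d : ℕ}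
    (hd : d ∣ Nat.card C) (V : Subgroup C) :
    (powMonoidHom d : C →* C).ker ≤ V ↔ d ∣ Nat.card V := by
  have hcard : Nat.card (powMonoidHom d : C →* C).ker = d := by
    rw [IsCyclic.card_powMonoidHom_ker, Nat.gcd_eq_right hd]
  refine ⟨fun h ↦ hcard ▸ Subgroup.card_dvd_of_le h, fun h ↦ ?_⟩
  have hle : (powMonoidHom d : V →* V).ker.map V.subtype ≤ (powMonoidHom d : C →* C).ker := by
    rintro _ ⟨x, hx, rfl⟩
    exact congrArg V.subtype hx
  rw [← Subgroup.eq_of_le_of_card_ge hle]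
  · exact Subgroup.map_subtype_le _
  · rw [hcard, Subgroup.card_map_of_injective V.subtype_injective, IsCyclic.card_powMonoidHom_ker,
      Nat.gcd_eq_right h]

theorem isSieveWeight_powMonoidHom_ker {C : Type*} [CommGroup C] [Finite C] [IsCyclic C] {d : ℕ}
    (hd : d ∣ Nat.card C) :
    IsSieveWeight d fun U : Subgroup C ↦ if U = (powMonoidHom d).ker then 1 else 0 := by
  intro V
  rw [sum_ite_eq']
  simp only [mem_filter_univ, powMonoidHom_ker_le_iff hd]

theorem choose_prime_pow_modEq {p : ℕ} (hp : p.Prime) (τ m l n : ℕ) :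
    ((p ^ (τ + m + l) * n).choose (p ^ (m + l)) : ℤ) ≡
      (p ^ (τ + l) * n).choose (p ^ l) [ZMOD p ^ (τ + l + 1)] := by
  obtain rfl | hn := eq_or_ne n 0
  · simp [Nat.choose_eq_zero_of_lt, hp.pos]
  obtain ⟨C, _, _, _, hC⟩ : ∃ (C : Type) (_ : CommGroup C) (_ : Finite C) (_ : IsCyclic C),
      Nat.card C = p ^ (τ + m + l) * n :=
    have : NeZero (p ^ (τ + m + l) * n) := ⟨mul_ne_zero (pow_ne_zero _ hp.ne_zero) hn⟩
    ⟨Multiplicative (ZMod (p ^ (τ + m + l) * n)), inferInstance, inferInstance, inferInstance,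
      by simp⟩
  have hd : p ^ m ∣ Nat.card C := hC ▸ Dvd.dvd.mul_right (pow_dvd_pow p (by omega)) n
  have h := (isSieveWeight_powMonoidHom_ker hd).choose_modEq_sum_prime_pow hp hC
  have hker := IsCyclic.card_powMonoidHom_ker C (p ^ m)
  rw [Nat.gcd_eq_right hd] at hker
  have hindex : (powMonoidHom (p ^ m) : C →* C).ker.index = p ^ (τ + l) * n :=
    index_eq_of_card_eq_prime_pow hp hker (by rw [hC]; congr 2; omega)
  have hquot : p ^ (m + l) / p ^ m = p ^ l := by rw [Nat.pow_div (by omega) hp.pos]; simp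
  rw [hC, sum_filter, sum_eq_single (powMonoidHom (p ^ m)).ker] at h
  · rwa [hindex, hker, hquot, if_pos rfl, if_pos (pow_dvd_pow p (Nat.le_add_right m l)),
      one_mul] at h
  · intro U _ hU
    simp [hU]
  · simp

theorem exists_choose_eq_prime_pow_mul {p : ℕ} (hp : p.Prime) (τ l : ℕ) {n : ℕ} (hn : ¬ p ∣ n) :
    ∃ u : ℤ, ¬ (p : ℤ) ∣ u ∧ ((p ^ (τ + l) * n).choose (p ^ l) : ℤ) = p ^ τ * u := by
  have h := choose_prime_pow_modEq hp τ l 0 n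
  simp only [add_zero, pow_zero, Nat.choose_one_right, Nat.cast_mul, Nat.cast_pow] at h
  obtain ⟨z, hz⟩ := Int.modEq_iff_dvd.1 h.symm
  refine ⟨n + p * z, ?_, ?_⟩
  · rwa [dvd_add_left (dvd_mul_right _ z), Int.natCast_dvd_natCast]
  · rw [pow_succ] at hz
    linarith

/-! ### The sum of the weights -/

namespace IsSieveWeight

variable {G : Type*} [Group G] [Finite G] {w : Subgroup G → ℤ} {p m l : ℕ}

theorem mul_choose_modEq {τ n : ℕ} (hp : p.Prime)
    (hG : Nat.card G = p ^ (τ + m + l) * n) (hw : IsSieveWeight (p ^ m) w)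
    (hdvd : ∀ (U : Subgroup G) (j : ℕ), j ≤ l → Nat.card U = p ^ (m + j) → (p : ℤ) ^ j ∣ w U)
    {U : Subgroup G} (hU : Nat.card U ∣ p ^ (m + l)) :
    w U * (U.index.choose (p ^ (m + l) / Nat.card U) : ℕ) ≡
      w U * ((p ^ (τ + l) * n).choose (p ^ l) : ℕ) [ZMOD p ^ (τ + l + 1)] := by
  obtain ⟨a, hal, ha⟩ := (Nat.dvd_prime_pow hp).1 hU
  obtain ham | hma := lt_or_ge a m
  · rw [hw.eq_zero (by rwa [ha, Nat.pow_dvd_pow_iff_le_right hp.one_lt, not_le]), zero_mul,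
      zero_mul]
  obtain ⟨j, rfl⟩ := Nat.exists_eq_add_of_le hma
  have hjl : j ≤ l := Nat.le_of_add_le_add_left hal
  obtain ⟨i, rfl⟩ := Nat.exists_eq_add_of_le hjl
  have hindex : U.index = p ^ (τ + i) * n :=
    index_eq_of_card_eq_prime_pow hp ha (by rw [hG]; congr 2; omega)
  have hquot : p ^ (m + (j + i)) / Nat.card U = p ^ i := by
    rw [ha, ← add_assoc, pow_add p (m + j), Nat.mul_div_cancel_left _ (pow_pos hp.pos _)]
  have hchoose := Int.modEq_iff_dvd.1 (choose_prime_pow_modEq hp τ j i n).symm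
  rw [hindex, hquot, Int.modEq_iff_dvd, ← mul_sub,
    show τ + (j + i) + 1 = j + (τ + i + 1) by omega, pow_add, ← add_assoc τ]
  exact mul_dvd_mul (hdvd U j hjl ha) hchoose

theorem sum_modEq_one_of_pow_dvd {τ n : ℕ} (hp : p.Prime) (hn : ¬ p ∣ n)
    (hG : Nat.card G = p ^ (τ + m + l) * n)
    (hw : IsSieveWeight (p ^ m) w)
    (hdvd : ∀ (U : Subgroup G) (j : ℕ), j ≤ l → Nat.card U = p ^ (m + j) → (p : ℤ) ^ j ∣ w U) :
    ∑ U with Nat.card (U : Subgroup G) ∣ p ^ (m + l), w U ≡ 1 [ZMOD p ^ (l + 1)] := by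
  obtain ⟨u, hu, hbu⟩ := exists_choose_eq_prime_pow_mul hp τ l hn
  have h : p ^ τ * (u * 1) ≡ p ^ τ * (u * ∑ U with Nat.card (U : Subgroup G) ∣ p ^ (m + l), w U)
      [ZMOD p ^ (τ + l + 1)] := calc
    p ^ τ * (u * 1) = ((p ^ (τ + l) * n).choose (p ^ l) : ℤ) := by rw [hbu, mul_one]
    _ ≡ (Nat.card G).choose (p ^ (m + l)) [ZMOD p ^ (τ + l + 1)] :=
      hG ▸ (choose_prime_pow_modEq hp τ m l n).symm
    _ ≡ ∑ U with Nat.card (U : Subgroup G) ∣ p ^ (m + l),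
        w U * (U.index.choose (p ^ (m + l) / Nat.card U) : ℕ) [ZMOD p ^ (τ + l + 1)] :=
      hw.choose_modEq_sum_prime_pow hp hG
    _ ≡ ∑ U with Nat.card (U : Subgroup G) ∣ p ^ (m + l),
        w U * ((p ^ (τ + l) * n).choose (p ^ l) : ℕ) [ZMOD p ^ (τ + l + 1)] :=
      Int.ModEq.sum fun U hU ↦ hw.mul_choose_modEq hp hG hdvd (mem_filter.1 hU).2
    _ = p ^ τ * (u * ∑ U with Nat.card (U : Subgroup G) ∣ p ^ (m + l), w U) := by
      rw [← sum_mul, hbu, mul_comm, mul_assoc]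
  rw [Int.modEq_iff_dvd, ← mul_sub, ← mul_sub, add_assoc, pow_add] at h
  rw [Int.modEq_comm, Int.modEq_iff_dvd]
  exact (Nat.prime_iff_prime_int.1 hp).pow_dvd_of_dvd_mul_left _ hu
    (Int.dvd_of_mul_dvd_mul_left (pow_ne_zero τ (Int.natCast_ne_zero.2 hp.ne_zero)) h)

theorem pow_dvd_of_sum_modEq_one {j : ℕ} (hp : p.Prime)
    (hG : Nat.card G = p ^ (m + j + 1)) (hw : IsSieveWeight (p ^ m) w)
    (h : ∑ U with Nat.card (U : Subgroup G) ∣ p ^ (m + j), w U ≡ 1 [ZMOD p ^ (j + 1)]) :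
    (p : ℤ) ^ (j + 1) ∣ w ⊤ := by
  simp_rw [← mem_properDivisors_prime_pow_succ hp, ← hG] at h
  rw [hw.sum_properDivisors, if_pos (hG ▸ pow_dvd_pow p (by omega)), Int.modEq_iff_dvd] at h
  simpa using h

theorem sum_modEq_one (hp : p.Prime) (hG : p ^ (m + l) ∣ Nat.card G)
    (hw : IsSieveWeight (p ^ m) w) :
    ∑ U with Nat.card (U : Subgroup G) ∣ p ^ (m + l), w U ≡ 1 [ZMOD p ^ (l + 1)] := by
  induction l using Nat.strong_induction_on generalizing G with
  | _ l ih =>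
    obtain ⟨k, hk⟩ := hG
    have hk0 : k ≠ 0 := right_ne_zero_of_mul (hk ▸ Nat.card_pos.ne')
    obtain ⟨τ, n, hn, rfl⟩ := Nat.exists_eq_pow_mul_and_not_dvd hk0 p hp.ne_one
    have hcard : Nat.card G = p ^ (τ + m + l) * n := by
      rw [hk]
      ring
    refine hw.sum_modEq_one_of_pow_dvd hp hn hcard fun U j hj hU ↦ ?_
    obtain _ | j := j
    · simp
    have h := ih j hj (G := U) (hU ▸ pow_dvd_pow p (by omega)) (hw.map_subtype U)
    simpa [← MonoidHom.range_eq_map] using pow_dvd_of_sum_modEq_one hp hU (hw.map_subtype U) h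

end IsSieveWeight

/-! ### Chains of subgroups -/

section chains

variable {G : Type*} [Group G] {p s : ℕ}

theorem chainCount_empty : chainCount G p s ∅ = 1 := by
  rw [chainCount, Nat.card_eq_one_iff_unique]
  exact ⟨⟨fun f g ↦ Subtype.ext (Subsingleton.elim _ _)⟩, ⟨⟨isEmptyElim, by simp⟩⟩⟩

/-- `f` is one of the chains counted by `chainCount G p s I`: it is antitone and `f i` has order
`p ^ (s - i)`. -/
def IsSubgroupChain (p s : ℕ) {I : Finset ℕ} (f : I → Subgroup G) : Prop :=
  Antitone f ∧ ∀ i, Nat.card (f i) = p ^ (s - i)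

theorem chainCount_eq_card {I : Finset ℕ} :
    chainCount G p s I = Nat.card {f : I → Subgroup G // IsSubgroupChain p s f} :=
  rfl

theorem isSubgroupChain_map_subtype {V : Subgroup G} {I : Finset ℕ} {f : I → Subgroup V} :
    IsSubgroupChain p s (fun i ↦ (f i).map V.subtype) ↔ IsSubgroupChain p s f := by
  simp only [IsSubgroupChain, Antitone, Subgroup.map_subtype_le_map_subtype,
    Subgroup.card_map_of_injective V.subtype_injective]

theorem card_subgroupChain_le (V : Subgroup G) (I : Finset ℕ) :
    Nat.card {f : I → Subgroup G // (∀ i, f i ≤ V) ∧ IsSubgroupChain p s f} =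
      chainCount V p s I := by
  refine (Nat.card_congr (Equiv.ofBijective (fun f : {f : I → Subgroup V // IsSubgroupChain p s f} ↦
    (⟨fun i ↦ (f.1 i).map V.subtype, fun i ↦ Subgroup.map_subtype_le _,
      isSubgroupChain_map_subtype.2 f.2⟩ :
      {f : I → Subgroup G // (∀ i, f i ≤ V) ∧ IsSubgroupChain p s f})) ⟨fun f g h ↦ ?_, ?_⟩)).symm
  · exact Subtype.ext (funext fun i ↦
      Subgroup.map_injective V.subtype_injective (congrFun (congrArg Subtype.val h) i))
  · rintro ⟨f, hV, hf⟩
    have hmap : (fun i ↦ ((f i).subgroupOf V).map V.subtype) = f :=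
      funext fun i ↦ Subgroup.map_subgroupOf_eq_of_le (hV i)
    exact ⟨⟨fun i ↦ (f i).subgroupOf V, isSubgroupChain_map_subtype.1 (by rwa [hmap])⟩,
      Subtype.ext hmap⟩

theorem isSubgroupChain_insert {c : ℕ} {I : Finset ℕ} (hc : ∀ i ∈ I, c < i)
    {f : ↥(insert c I) → Subgroup G} :
    IsSubgroupChain p s f ↔ Nat.card (f ⟨c, mem_insert_self c I⟩) = p ^ (s - c) ∧
      (∀ i : I, f ⟨i, mem_insert_of_mem i.2⟩ ≤ f ⟨c, mem_insert_self c I⟩) ∧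
      IsSubgroupChain p s fun i : I ↦ f ⟨i, mem_insert_of_mem i.2⟩ := by
  refine ⟨fun ⟨hanti, hcard⟩ ↦ ⟨hcard _, fun i ↦ hanti (hc i i.2).le,
    fun i j hij ↦ hanti hij, fun i ↦ hcard _⟩, fun ⟨hcardc, hle, hanti, hcard⟩ ↦ ⟨?_, ?_⟩⟩
  · rintro ⟨i, hi⟩ ⟨j, hj⟩ hij
    obtain rfl | hjI := mem_insert.1 hj
    · obtain rfl | hiI := mem_insert.1 hi
      · exact le_rfl
      · exact absurd hij (hc i hiI).not_ge
    · obtain rfl | hiI := mem_insert.1 hi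
      · exact hle ⟨j, hjI⟩
      · exact hanti (show (⟨i, hiI⟩ : I) ≤ ⟨j, hjI⟩ from hij)
  · rintro ⟨i, hi⟩
    obtain rfl | hiI := mem_insert.1 hi
    · exact hcardc
    · exact hcard ⟨i, hiI⟩

theorem chainCount_insert [Finite G] {c : ℕ} {I : Finset ℕ} (hc : ∀ i ∈ I, c < i) :
    chainCount G p s (insert c I) =
      ∑ V with Nat.card (V : Subgroup G) = p ^ (s - c), chainCount V p s I := by
  have hcI : c ∉ I := fun h ↦ (hc c h).false
  let e : (↥(insert c I) → Subgroup G) ≃ Subgroup G × (I → Subgroup G) :=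
    ((subtypeInsertEquivOption hcI).arrowCongr (Equiv.refl _)).trans Equiv.piOptionEquivProd
  rw [chainCount_eq_card, Nat.card_congr ((e.subtypeEquiv fun f ↦ isSubgroupChain_insert hc).trans
    (Equiv.subtypeProdEquivSigmaSubtype fun (V : Subgroup G) (f : I → Subgroup G) ↦
      Nat.card V = p ^ (s - c) ∧ (∀ i, f i ≤ V) ∧ IsSubgroupChain p s f)),
    Nat.card_sigma, sum_filter]
  refine sum_congr rfl fun V _ ↦ ?_
  split_ifs with hV
  · simp only [hV, true_and, card_subgroupChain_le]
  · simp only [hV, false_and]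
    exact Nat.card_of_isEmpty

/-- The alternating sum `∑ I ⊆ J, (-1) ^ |I| * N(s - I)`, whose term for `I = ∅` is `1`. -/
noncomputable def signedChainSum (G : Type*) [Group G] (p s : ℕ) (J : Finset ℕ) : ℤ :=
  ∑ I ∈ J.powerset, (-1) ^ #I * (chainCount G p s I : ℤ)

theorem signedChainSum_insert [Finite G] {c : ℕ} {J : Finset ℕ} (hc : ∀ i ∈ J, c < i) :
    signedChainSum G p s (insert c J) = signedChainSum G p s J -
      ∑ V with Nat.card (V : Subgroup G) = p ^ (s - c), signedChainSum V p s J := by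
  have hcJ : c ∉ J := fun h ↦ (hc c h).false
  simp only [signedChainSum]
  rw [sum_powerset_insert hcJ, sub_eq_add_neg, sum_comm, ← sum_neg_distrib]
  congr 1
  refine sum_congr rfl fun I hI ↦ ?_
  have hIJ := mem_powerset.1 hI
  rw [card_insert_of_notMem fun h ↦ hcJ (hIJ h), chainCount_insert fun i hi ↦ hc i (hIJ hi),
    ← mul_sum, Nat.cast_sum, pow_succ]
  ring

end chains

theorem IsSieveWeight.signedChainSum_eq {G : Type*} [Group G] [Finite G] {w : Subgroup G → ℤ}
    {p m l c : ℕ} (hp : p.Prime) (hw : IsSieveWeight (p ^ m) w) (hc : c ≤ l + 1) :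
    signedChainSum G p (m + l) (Ico c (l + 1)) =
      1 - ∑ U with Nat.card (U : Subgroup G) ∈ (p ^ (m + l + 1 - c)).properDivisors, w U := by
  induction hc using Nat.decreasingInduction generalizing G with
  | self =>
    rw [Ico_self, signedChainSum, powerset_empty, sum_singleton, sum_eq_zero]
    · simp [chainCount_empty]
    · intro U hU
      refine hw.eq_zero fun h ↦ ?_
      have hlt := (Nat.mem_properDivisors.1 (mem_filter.1 hU).2).2
      rw [Nat.add_assoc, Nat.add_sub_cancel] at hlt
      exact (Nat.le_of_dvd Nat.card_pos h).not_gt hlt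
  | of_succ c hc ih =>
    have hV (V : Subgroup G) (hV : Nat.card V = p ^ (m + l - c)) :
        signedChainSum V p (m + l) (Ico (c + 1) (l + 1)) = w V := by
      rw [ih (hw.map_subtype V), Nat.add_sub_add_right, ← hV, (hw.map_subtype V).sum_properDivisors,
        hV, if_pos (pow_dvd_pow p (by omega))]
      simp [← MonoidHom.range_eq_map]
    rw [← insert_Ico_add_one_left_eq_Ico hc,
      signedChainSum_insert (J := Ico (c + 1) (l + 1)) fun i hi ↦ (mem_Ico.1 hi).1, ih hw,
      sum_congr rfl fun V h ↦ hV V (mem_filter.1 h).2, sub_sub, Nat.add_sub_add_right,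
      show m + l + 1 - c = m + l - c + 1 by omega,
      sum_card_mem_properDivisors_prime_pow_succ hp]

theorem pow_dvd_signedChainSum {G : Type*} [Group G] [Finite G] {p s l : ℕ} (hp : p.Prime)
    (hG : p ^ s ∣ Nat.card G) (hl : l ≤ s) :
    (p : ℤ) ^ (l + 1) ∣ signedChainSum G p s (range (l + 1)) := by
  obtain ⟨m, rfl⟩ := Nat.exists_eq_add_of_le' hl
  have hw := isSieveWeight_sieveWeight (G := G) (p ^ m)
  rw [range_eq_Ico, hw.signedChainSum_eq hp (Nat.zero_le _), Nat.sub_zero]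
  simp_rw [mem_properDivisors_prime_pow_succ hp]
  exact Int.modEq_iff_dvd.1 (hw.sum_modEq_one hp hG)

end

/-- **The sieve formula.** Let `G` be a finite group, `p` a prime, `|G| = p^t * n`
with `p ∤ n`, and `s ∈ [0, t]`. Then for every `l ∈ [0, s]`,
`∑_{∅ ≠ I ⊆ [0, l]} (-1)^{|I|+1} · N(s - I) ≡ 1 (mod p^{l+1})`. -/
theorem sieve_formula {G : Type*} [Group G] [Finite G] (p t n s l : ℕ)
    (hp : p.Prime) (hG : Nat.card G = p ^ t * n) (hn : ¬ p ∣ n)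
    (hs : s ≤ t) (hl : l ≤ s) :
    (∑ I ∈ (Finset.range (l + 1)).powerset.filter (· ≠ ∅),
        (-1 : ℤ) ^ (I.card + 1) * (chainCount G p s I : ℤ))
      ≡ 1 [ZMOD (p : ℤ) ^ (l + 1)] := by
  have hdvd : p ^ s ∣ Nat.card G := hG ▸ Dvd.dvd.mul_right (pow_dvd_pow p hs) n
  have hsum : signedChainSum G p s (Finset.range (l + 1)) =
      1 - ∑ I ∈ (Finset.range (l + 1)).powerset.filter (· ≠ ∅),
        (-1 : ℤ) ^ (I.card + 1) * (chainCount G p s I : ℤ) := by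
    rw [signedChainSum, Finset.filter_ne', ← Finset.add_sum_erase _ _ (Finset.empty_mem_powerset _),
      sub_eq_add_neg, ← Finset.sum_neg_distrib]
    congr 1
    · simp [chainCount_empty]
    · exact Finset.sum_congr rfl fun I _ ↦ by ring
  rw [Int.modEq_iff_dvd, ← hsum]
  exact pow_dvd_signedChainSum hp hdvd hl
end

section
/- The number N(s) of subgroups of G of order p^s is congruent to 1 modulo p (Theorem of Sylow–Frobenius). -/
/-!
Wielandt's counting argument, applied to the subsets of `G` that contain `1`. Let `q = p ^ s`. If
`A` has `q` elements, exactly `q / |stab A|` of its left translates contain `1`, namely the `a⁻¹ A`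
with `a ∈ A`. This quotient is `1` or a multiple of `p`, and it is `1` precisely when `A` is a right
coset of `stab A`, that is, when `A` is a subgroup in case `1 ∈ A`. Hence, modulo `p`, the number of
subgroups of order `q` is the number `(|G| - 1).choose (q - 1)` of all `q`-subsets containing `1`,
and this is `1` modulo `p` by Lucas' theorem.
-/

open Finset MulAction
open scoped Pointwise

section Choose

variable {p : ℕ} [Fact p.Prime]

theorem choose_mul_add_sub_one_modEq (a b : ℕ) :
    (p * a + (p - 1)).choose (p * b + (p - 1)) ≡ a.choose b [MOD p] := by
  have hp : 0 < p := (Fact.out : p.Prime).pos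
  have hlt : p - 1 < p := Nat.sub_one_lt_of_lt hp
  simpa only [Nat.mul_add_mod, Nat.mod_eq_of_lt hlt, Nat.mul_add_div hp, Nat.div_eq_of_lt hlt,
    Nat.choose_self, one_mul, add_zero] using
    Choose.choose_modEq_choose_mod_mul_choose_div_nat (p := p) (n := p * a + (p - 1))
      (k := p * b + (p - 1))

theorem choose_pow_mul_sub_one_modEq_one (s : ℕ) {m : ℕ} (hm : 0 < m) :
    (p ^ s * m - 1).choose (p ^ s - 1) ≡ 1 [MOD p] := by
  have hp : 0 < p := (Fact.out : p.Prime).pos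
  have pred_mul {a : ℕ} (ha : 0 < a) : p * a - 1 = p * (a - 1) + (p - 1) := by
    obtain ⟨b, rfl⟩ := Nat.exists_eq_add_of_lt ha
    rw [zero_add, Nat.add_sub_cancel, mul_add_one, Nat.add_sub_assoc hp]
  induction s with
  | zero => simp [Nat.ModEq.refl]
  | succ s ih =>
    have hs : 0 < p ^ s := pow_pos hp s
    rw [pow_succ', mul_assoc, pred_mul (Nat.mul_pos hs hm), pred_mul hs]
    exact (choose_mul_add_sub_one_modEq _ _).trans ih

end Choose

theorem card_filter_mem_and_card_eq {α : Type*} [Fintype α] [DecidableEq α] (a : α) {k : ℕ}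
    (hk : 0 < k) :
    #{A : Finset α | a ∈ A ∧ #A = k} = (Fintype.card α - 1).choose (k - 1) := by
  rw [← card_univ, ← card_erase_of_mem (mem_univ a), ← card_powersetCard]
  refine card_nbij' (fun A ↦ A.erase a) (fun B ↦ insert a B) ?_ ?_ ?_ ?_
  · simp +contextual [Set.MapsTo, mem_powersetCard, erase_subset_erase]
  · intro B hB
    obtain ⟨haB, hcard⟩ : a ∉ B ∧ #B = k - 1 := by
      simpa [mem_powersetCard, subset_erase] using hB
    simp [haB, hcard, Nat.sub_add_cancel hk]
  · simp +contextual [Set.LeftInvOn]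
  · simp +contextual [Set.LeftInvOn, mem_powersetCard, subset_erase]

section Orbit

variable {G X : Type*} [Group G] [MulAction G X]

theorem ncard_orbit_inter_mul_card_stabilizer (x : X) (S : Set X) :
    (orbit G x ∩ S).ncard * Nat.card (stabilizer G x) = Nat.card {g : G // g • x ∈ S} := by
  have hrange : Set.range (ofQuotientStabilizer G x) = orbit G x := by
    ext y
    simp [QuotientGroup.mk_surjective.exists, mem_orbit_iff]
  rw [← hrange, Set.inter_comm, ← Set.image_preimage_eq_inter_range,
    Set.ncard_image_of_injective _ (injective_ofQuotientStabilizer G x), mul_comm,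
    ← Nat.card_coe_set_eq, ← QuotientGroup.card_preimage_mk]
  rfl

theorem dvd_card_of_forall_dvd_ncard_orbit_inter {d : ℕ} (S : Finset X)
    (h : ∀ x ∈ S, d ∣ (orbit G x ∩ S).ncard) : d ∣ #S := by
  classical
  let toOrbit (x : X) : orbitRel.Quotient G X := Quotient.mk _ x
  rw [card_eq_sum_card_image toOrbit S]
  refine dvd_sum fun ω hω ↦ ?_
  obtain ⟨x, hx, rfl⟩ := mem_image.1 hω
  have hfiber : (({y ∈ S | toOrbit y = toOrbit x} : Finset X) : Set X) = orbit G x ∩ S := by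
    ext y
    simp [toOrbit, Quotient.eq, orbitRel_apply, and_comm]
  rw [← Set.ncard_coe_finset, hfiber]
  exact h x hx

end Orbit

section Subsets

variable {G : Type*} [Group G] [DecidableEq G]

theorem ncard_orbit_inter_one_mem_mul_card_stabilizer (A : Finset G) :
    (orbit G A ∩ {B | 1 ∈ B}).ncard * Nat.card (stabilizer G A) = #A := by
  rw [ncard_orbit_inter_mul_card_stabilizer, ← Nat.card_eq_finsetCard]
  refine Nat.card_congr ((Equiv.inv G).subtypeEquiv fun g ↦ ?_)
  simp [← inv_smul_mem_iff]

theorem coe_stabilizer_eq_of_one_mem {A : Finset G} (h1 : 1 ∈ A)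
    (hA : Nat.card (stabilizer G A) = #A) : (stabilizer G A : Set G) = A := by
  refine Set.eq_of_subset_of_ncard_le ?_ ?_
  · intro g hg
    simpa using (mem_stabilizer_finset.1 hg 1).2 h1
  · rw [Set.ncard_coe_finset, ← hA]
    exact (Nat.card_coe_set_eq _).le

theorem stabilizer_toFinset (U : Subgroup G) [Fintype U] :
    stabilizer G (U : Set G).toFinset = U := by
  rw [← stabilizer_coe_finset, Set.coe_toFinset, stabilizer_subgroup]

theorem card_filter_card_stabilizer_eq [Fintype G] (q : ℕ) :
    #{A : Finset G | (1 ∈ A ∧ #A = q) ∧ Nat.card (stabilizer G A) = q} =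
      Nat.card {U : Subgroup G // Nat.card U = q} := by
  classical
  rw [← Fintype.card_subtype, ← Nat.card_eq_fintype_card]
  exact Nat.card_congr
    { toFun A := ⟨stabilizer G A.1, A.2.2⟩
      invFun U := ⟨(U.1 : Set G).toFinset, by
        obtain ⟨U, rfl⟩ := U
        simp only [stabilizer_toFinset]
        simp [one_mem]⟩
      left_inv := by
        rintro ⟨A, ⟨h1, rfl⟩, hA⟩
        simp [coe_stabilizer_eq_of_one_mem h1 hA]
      right_inv := fun U ↦ Subtype.ext (stabilizer_toFinset U.1) }

variable {p s : ℕ} [Fact p.Prime]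

theorem dvd_ncard_orbit_inter_one_mem {A : Finset G} (hA : #A = p ^ s)
    (hstab : Nat.card (stabilizer G A) ≠ p ^ s) :
    p ∣ (orbit G A ∩ {B | 1 ∈ B}).ncard := by
  have hmul := ncard_orbit_inter_one_mem_mul_card_stabilizer A
  rw [hA] at hmul
  obtain ⟨j, -, hj⟩ := (Nat.dvd_prime_pow Fact.out).1 (Dvd.intro _ hmul)
  have hj0 : j ≠ 0 := by
    rintro rfl
    exact hstab (by simpa [hj] using hmul)
  exact hj ▸ dvd_pow_self p hj0

variable (G p s) in
theorem dvd_card_filter_card_stabilizer_ne [Fintype G] :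
    p ∣ #{A : Finset G | (1 ∈ A ∧ #A = p ^ s) ∧ Nat.card (stabilizer G A) ≠ p ^ s} := by
  refine dvd_card_of_forall_dvd_ncard_orbit_inter (G := G) _ fun A hA ↦ ?_
  obtain ⟨⟨-, hcard⟩, hstab⟩ := (mem_filter_univ A).1 hA
  convert dvd_ncard_orbit_inter_one_mem hcard hstab using 2
  ext B
  refine and_congr_right ?_
  rintro ⟨g, rfl⟩
  have hconj : Nat.card (stabilizer G (g • A)) = Nat.card (stabilizer G A) :=
    Nat.card_congr (stabilizerEquivStabilizer rfl).symm.toEquiv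
  simp only [coe_filter_univ, Set.mem_ofPred_eq, card_smul_finset, hcard, hconj, hstab, and_true,
    ne_eq, not_false_eq_true]

end Subsets

theorem card_subgroup_modEq_choose {G : Type*} [Group G] [Finite G] (p s : ℕ) [Fact p.Prime] :
    Nat.card {U : Subgroup G // Nat.card U = p ^ s} ≡
      (Nat.card G - 1).choose (p ^ s - 1) [MOD p] := by
  classical
  have := Fintype.ofFinite G
  have hpos : 0 < p ^ s := pow_pos (Fact.out : p.Prime).pos s
  rw [Nat.card_eq_fintype_card (α := G), ← card_filter_mem_and_card_eq (1 : G) hpos,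
    ← card_filter_add_card_filter_not (fun A : Finset G ↦ Nat.card (stabilizer G A) = p ^ s),
    filter_filter, filter_filter, card_filter_card_stabilizer_eq]
  exact .symm <| .add_left _ <|
    Nat.modEq_zero_iff_dvd.2 (dvd_card_filter_card_stabilizer_ne G p s)

/-- **Theorem of Sylow–Frobenius.** Let `G` be a finite group and `p` a prime with
`|G| = p^t * n` and `p ∤ n`. For `s ∈ [0, t]`, the number of subgroups of `G` of
order `p^s` is congruent to `1` modulo `p`. -/
theorem sylow_frobenius {G : Type*} [Group G] [Finite G] (p t n s : ℕ)
    (hp : p.Prime) (hG : Nat.card G = p ^ t * n) (hn : ¬ p ∣ n) (hs : s ≤ t) :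
    Nat.card {U : Subgroup G // Nat.card U = p ^ s} ≡ 1 [MOD p] := by
  have : Fact p.Prime := ⟨hp⟩
  obtain ⟨m, hm⟩ : p ^ s ∣ Nat.card G := hG ▸ (pow_dvd_pow p hs).mul_right n
  have hm0 : 0 < m := Nat.pos_of_mul_pos_left (hm ▸ Nat.card_pos)
  calc Nat.card {U : Subgroup G // Nat.card U = p ^ s}
    _ ≡ (Nat.card G - 1).choose (p ^ s - 1) [MOD p] := card_subgroup_modEq_choose p s
    _ ≡ 1 [MOD p] := by rw [hm]; exact choose_pow_mul_sub_one_modEq_one s hm0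
end

section
/- Let l ∈ [0, s], k ∈ [0, l] and Î ⊆ [l, s]. Summing over all pairs (U, M), where U ≤ G with |U| = p^{s−l}, M ⊆ G with 1 ∈ M, |M| = p^s, |Stab(M)| = p^{s−k}, and M is a union of right cosets of U, the number of chains of subgroups of U whose orders are p^{s−i} for i ∈ Î (in increasing order), one obtains Σ_{I ⊆ [0, k], k ∈ I} (-1)^{|I|+1} · b(min I) · N(s − (I ∪ {l} ∪ Î)). -/
open Pointwise

/-- `bCoeff p t s n k` is the binomial coefficient `b(k) = C(p^(t-s+k)·n - 1, p^k - 1)`,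
as an integer. -/
def bCoeff (p t s n k : ℕ) : ℤ :=
  (Nat.choose (p ^ (t - s + k) * n - 1) (p ^ k - 1) : ℤ)

/-!
Let `a k J` be the number of pairs of a set `M ∋ 1` with `|M| = p ^ s`, `|Stab M| = p ^ (s - k)`,
and a chain of orders `s - J` in `Stab M`. A set `M` is a union of right cosets of `U` exactly when
`U ≤ Stab M`, so `U` can be put on top of the chain inside it, and the left-hand side is `a k` at
`{l} ∪ Ihat`.

Adding `k` to `J` does not change `a k J`, since `Stab M` is the only subgroup of `Stab M` of its
order. A chain containing a subgroup `U` of order `p ^ (s - k)` fits into `Stab M` exactly for those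
`M` which are unions of right cosets of `U`, and there are `b k` of these; each of them has a
stabilizer of order `p ^ (s - j)` for some `j ≤ k`. Double counting gives
`∑ j ≤ k, a j ({k} ∪ J) = b k * N (s - ({k} ∪ J))`, a recursion for `a k` whose solution is the
alternating sum.
-/

section SumOverSubsets

variable {ι A : Type*} [AddCommGroup A]

lemma sum_powerset_insert_filter_mem [DecidableEq ι] {a : ι} {s : Finset ι} (ha : a ∉ s)
    (g : Finset ι → A) :
    ∑ I ∈ (insert a s).powerset with a ∈ I, g I = ∑ I ∈ s.powerset, g (insert a I) := by
  rw [Finset.sum_filter, Finset.sum_powerset_insert ha, Finset.sum_eq_zero, zero_add]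
  · simp
  · exact fun I hI ↦ if_neg fun haI ↦ ha (Finset.mem_powerset.mp hI haI)

lemma sum_powerset_range_eq_sum_max (g : Finset ℕ → A) (k : ℕ) :
    ∑ I ∈ (Finset.range k).powerset, g I =
      g ∅ + ∑ j ∈ Finset.range k, ∑ I ∈ (Finset.range (j + 1)).powerset with j ∈ I, g I := by
  induction k with
  | zero => simp
  | succ k ih =>
    rw [Finset.sum_range_succ, ← add_assoc, ← ih, Finset.range_add_one,
      sum_powerset_insert_filter_mem Finset.notMem_range_self,
      Finset.sum_powerset_insert Finset.notMem_range_self]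

lemma sInf_insert_eq_of_mem_of_le {I : Finset ℕ} {j k : ℕ} (hj : j ∈ I) (hjk : j ≤ k) :
    sInf (↑(insert k I) : Set ℕ) = sInf (I : Set ℕ) := by
  rw [Finset.coe_insert, csInf_insert (OrderBot.bddBelow _) ⟨j, hj⟩]
  exact inf_eq_right.mpr ((Nat.sInf_le hj).trans hjk)

theorem eq_alternating_sum_of_recursion {s : ℕ} {a w : ℕ → Finset ℕ → A}
    (hrec : ∀ k ≤ s, ∀ J : Finset ℕ, (∀ i ∈ J, k ≤ i) →
      a k J = w k (insert k J) - ∑ j ∈ Finset.range k, a j (insert k J))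
    (k : ℕ) (hk : k ≤ s) (J : Finset ℕ) (hJ : ∀ i ∈ J, k ≤ i) :
    a k J = ∑ I ∈ (Finset.range (k + 1)).powerset with k ∈ I,
      (-1 : ℤ) ^ (I.card + 1) • w (sInf (I : Set ℕ)) (I ∪ J) := by
  induction k using Nat.strong_induction_on generalizing J with
  | _ k ih =>
    have hlower : ∀ j < k, a j (insert k J) = -∑ I ∈ (Finset.range (j + 1)).powerset with j ∈ I,
        (-1 : ℤ) ^ ((insert k I).card + 1) • w (sInf ↑(insert k I)) (insert k I ∪ J) := by
      intro j hj
      have hkJ : ∀ i ∈ insert k J, j ≤ i :=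
        Finset.forall_mem_insert _ _ _ |>.mpr ⟨hj.le, fun i hi ↦ hj.le.trans (hJ i hi)⟩
      rw [ih j hj (hj.le.trans hk) _ hkJ, ← Finset.sum_neg_distrib]
      refine Finset.sum_congr rfl fun I hI ↦ ?_
      obtain ⟨hIj, hjI⟩ := Finset.mem_filter.mp hI
      have hkI : k ∉ I := fun h ↦ by
        have := Finset.mem_range.mp (Finset.mem_powerset.mp hIj h)
        omega
      rw [Finset.card_insert_of_notMem hkI, sInf_insert_eq_of_mem_of_le hjI hj.le,
        Finset.insert_union, Finset.union_insert, pow_succ _ (I.card + 1), mul_neg_one, neg_smul,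
        neg_neg]
    rw [hrec k hk J hJ, Finset.range_add_one,
      sum_powerset_insert_filter_mem Finset.notMem_range_self, sum_powerset_range_eq_sum_max,
      Finset.sum_congr rfl fun j hj ↦ hlower j (Finset.mem_range.mp hj)]
    simp [sub_eq_add_neg]

end SumOverSubsets

section Counting

variable {α : Type*} [Finite α]

lemma card_subtype_mem_and_card_eq (a : α) {m : ℕ} (hm : m ≠ 0) :
    Nat.card {T : Set α // a ∈ T ∧ Nat.card T = m} = (Nat.card α - 1).choose (m - 1) := by
  classical
  have := Fintype.ofFinite α
  have toFinset : {T : Set α // a ∈ T ∧ Nat.card T = m} ≃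
      {T : Finset α // a ∈ T ∧ T.card = m} :=
    (Fintype.finsetEquivSet.subtypeEquiv fun T ↦ by simp).symm
  have herase : (Finset.univ.filter fun T : Finset α ↦ a ∈ T ∧ T.card = m).card =
      ((Finset.univ.erase a).powersetCard (m - 1)).card := by
    refine Finset.card_nbij' (Finset.erase · a) (insert a) ?_ ?_ ?_ ?_
    · intro T hT
      obtain ⟨haT, hTm⟩ := (Finset.mem_filter.mp hT).2
      exact Finset.mem_powersetCard.mpr ⟨Finset.erase_subset_erase a (Finset.subset_univ T),
        by rw [Finset.card_erase_of_mem haT, hTm]⟩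
    · intro T hT
      rw [Finset.mem_coe, Finset.mem_powersetCard] at hT
      have haT : a ∉ T := fun h ↦ Finset.notMem_erase a _ (hT.1 h)
      simp [Finset.card_insert_of_notMem haT, hT.2, Nat.sub_add_cancel (Nat.pos_of_ne_zero hm)]
    · intro T hT
      exact Finset.insert_erase (Finset.mem_filter.mp hT).2.1
    · intro T hT
      rw [Finset.mem_coe, Finset.mem_powersetCard] at hT
      exact Finset.erase_insert fun h ↦ Finset.notMem_erase a _ (hT.1 h)
  rw [Nat.card_congr toFinset, Nat.card_eq_fintype_card, Fintype.card_subtype, herase,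
    Finset.card_powersetCard, Finset.card_erase_of_mem (Finset.mem_univ a), Finset.card_univ,
    Nat.card_eq_fintype_card]

lemma card_eq_sum_card_of_existsUnique {ι : Type*} {s : Finset ι} {P : ι → α → Prop}
    (hP : ∀ x, ∃! i, i ∈ s ∧ P i x) :
    Nat.card α = ∑ i ∈ s, Nat.card {x // P i x} := by
  rw [← Finset.sum_coe_sort s fun i ↦ Nat.card {x // P i x}, ← Nat.card_sigma]
  refine (Nat.card_congr (.ofBijective (fun z : Σ i : s, {x // P i x} ↦ z.2.1) ⟨?_, ?_⟩)).symm
  · exact fun y z h ↦ Sigma.subtype_ext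
      (Subtype.ext ((hP z.2.1).unique ⟨y.1.2, (congrArg (P y.1) h).mp y.2.2⟩ ⟨z.1.2, z.2.2⟩)) h
  · intro x
    obtain ⟨i, ⟨hi, hx⟩, -⟩ := hP x
    exact ⟨⟨⟨i, hi⟩, x, hx⟩, rfl⟩

end Counting

section StableSets

variable {G : Type*} [Group G]

lemma le_stabilizer_iff_mul_eq {U : Subgroup G} {M : Set G} :
    U ≤ MulAction.stabilizer G M ↔ (U : Set G) * M = M := by
  constructor
  · refine fun hU ↦ (Set.mul_subset_iff.mpr fun u hu m hm ↦ ?_).antisymm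
      (Set.subset_mul_right M U.one_mem)
    exact (MulAction.mem_stabilizer_set.mp (hU hu) m).mpr hm
  · refine fun hM u hu ↦ MulAction.mem_stabilizer_set.mpr fun m ↦ ⟨fun h ↦ ?_, fun h ↦ ?_⟩
    · rw [← hM]
      exact ⟨u⁻¹, U.inv_mem hu, u • m, h, inv_smul_smul u m⟩
    · rw [← hM]
      exact Set.mul_mem_mul hu h

lemma exists_eq_iUnion_rightCosets_iff_le_stabilizer {U : Subgroup G} {M : Set G} :
    (∃ S : Set G, M = ⋃ g ∈ S, (U : Set G) * {g}) ↔ U ≤ MulAction.stabilizer G M := by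
  have hmul (S : Set G) : ⋃ g ∈ S, (U : Set G) * {g} = (U : Set G) * S := by
    rw [← Set.mul_iUnion₂, Set.biUnion_of_singleton]
  simp only [hmul, le_stabilizer_iff_mul_eq]
  refine ⟨?_, fun hM ↦ ⟨M, hM.symm⟩⟩
  rintro ⟨S, rfl⟩
  rw [← mul_assoc, coe_mul_coe]

lemma preimage_image_mk_inv {U : Subgroup G} {M : Set G} (hM : U ≤ MulAction.stabilizer G M) :
    (QuotientGroup.mk : G → G ⧸ U) ⁻¹' (QuotientGroup.mk '' M⁻¹) = M⁻¹ := by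
  rw [QuotientGroup.preimage_image_mk_eq_mul, ← inv_inj, mul_inv_rev, inv_inv, inv_coe_set,
    le_stabilizer_iff_mul_eq.mp hM]

lemma le_stabilizer_preimage_mk_inv (U : Subgroup G) (T : Set (G ⧸ U)) :
    U ≤ MulAction.stabilizer G ((QuotientGroup.mk ⁻¹' T : Set G)⁻¹) := fun u hu ↦
  MulAction.mem_stabilizer_set.mpr fun g ↦ by
    simp [QuotientGroup.mk_mul_of_mem _ (U.inv_mem hu)]

/-- The sets stable under left multiplication by `U` are the unions of right cosets of `U`;
inversion turns these into left cosets, which are the points of `G ⧸ U`. -/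
def stableSetEquiv (U : Subgroup G) :
    {M : Set G // U ≤ MulAction.stabilizer G M} ≃ Set (G ⧸ U) where
  toFun M := QuotientGroup.mk '' M.1⁻¹
  invFun T := ⟨(QuotientGroup.mk ⁻¹' T)⁻¹, le_stabilizer_preimage_mk_inv U T⟩
  left_inv M := Subtype.ext <| by simp only [preimage_image_mk_inv M.2, inv_inv]
  right_inv T := by
    simp only [inv_inv, Set.image_preimage_eq T QuotientGroup.mk_surjective]

lemma card_eq_card_mul_card_stableSetEquiv {U : Subgroup G}
    (M : {M : Set G // U ≤ MulAction.stabilizer G M}) :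
    Nat.card M.1 = Nat.card U * Nat.card (stableSetEquiv U M) := by
  rw [← QuotientGroup.card_preimage_mk, stableSetEquiv, Equiv.coe_fn_mk, preimage_image_mk_inv M.2,
    Set.natCard_inv]

lemma card_dvd_card_of_le_stabilizer {U : Subgroup G} {M : Set G}
    (hM : U ≤ MulAction.stabilizer G M) : Nat.card U ∣ Nat.card M :=
  ⟨_, card_eq_card_mul_card_stableSetEquiv ⟨M, hM⟩⟩

lemma one_mem_iff_mem_stableSetEquiv {U : Subgroup G}
    (M : {M : Set G // U ≤ MulAction.stabilizer G M}) :
    1 ∈ M.1 ↔ ((1 : G) : G ⧸ U) ∈ stableSetEquiv U M := by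
  change _ ↔ (1 : G) ∈ (QuotientGroup.mk : G → G ⧸ U) ⁻¹' (QuotientGroup.mk '' M.1⁻¹)
  rw [preimage_image_mk_inv M.2, Set.mem_inv, inv_one]

lemma card_stableSets_one_mem [Finite G] {U : Subgroup G} {m r : ℕ}
    (hG : Nat.card G = Nat.card U * r) (hm : m ≠ 0) :
    Nat.card {M : Set G // U ≤ MulAction.stabilizer G M ∧ 1 ∈ M ∧ Nat.card M = Nat.card U * m} =
      (r - 1).choose (m - 1) := by
  have hr : r = Nat.card (G ⧸ U) := by
    rw [← Subgroup.index_eq_card]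
    exact Nat.eq_of_mul_eq_mul_left Nat.card_pos (hG.symm.trans U.card_mul_index.symm)
  rw [hr, ← card_subtype_mem_and_card_eq ((1 : G) : G ⧸ U) hm]
  refine Nat.card_congr <| (Equiv.subtypeSubtypeEquivSubtypeInter _ _).symm.trans <|
    (stableSetEquiv U).subtypeEquiv fun M ↦ and_congr (one_mem_iff_mem_stableSetEquiv M) ?_
  rw [card_eq_card_mul_card_stableSetEquiv, Nat.mul_right_inj Nat.card_pos.ne']

end StableSets

section Chains

variable {G ι : Type*} [Group G]

/-- Chains of subgroups of `H` indexed by `J`, decreasing in the index, whose member at `i` has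
order `d i`. The chains of orders `s - J` of the paper are the case `d i = p ^ (s - i)`. -/
abbrev SubgroupChain [LE ι] (d : ι → ℕ) (J : Finset ι) (H : Subgroup G) : Type _ :=
  {f : J → Subgroup G //
    (∀ i j : J, (i : ι) ≤ (j : ι) → f j ≤ f i) ∧ (∀ i : J, Nat.card (f i) = d i) ∧ ∀ i : J, f i ≤ H}

lemma chainCount_eq_card_subgroupChain (p s : ℕ) (J : Finset ℕ) :
    chainCount G p s J =
      Nat.card (SubgroupChain (fun i ↦ p ^ (s - i)) J (⊤ : Subgroup G)) := by
  simp only [chainCount, SubgroupChain, le_top, implies_true, and_true]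

variable [Finite G] [PartialOrder ι] [DecidableEq ι] {d : ι → ℕ} {k : ι} {J : Finset ι}

lemma exists_subgroupChain_insert_extending (hJ : ∀ i ∈ J, k ≤ i) {U : Subgroup G}
    (hU : Nat.card U = d k) (f : SubgroupChain d J U) :
    ∃ g : SubgroupChain d (insert k J) U, g.1 ⟨k, Finset.mem_insert_self k J⟩ = U ∧
      ∀ i : J, g.1 ⟨i, Finset.mem_insert_of_mem i.2⟩ = f.1 i := by
  obtain ⟨f, hf, hcard, hfU⟩ := f
  have eq_of_notMem {i : ι} (hi : i ∈ insert k J) (hiJ : i ∉ J) : i = k :=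
    (Finset.mem_insert.mp hi).resolve_right hiJ
  let g (i : ι) : Subgroup G := if h : i ∈ J then f ⟨i, h⟩ else U
  have hg {i : ι} (h : i ∈ J) : g i = f ⟨i, h⟩ := dif_pos h
  have hg' {i : ι} (h : i ∉ J) : g i = U := dif_neg h
  have hgU (i : ι) : g i ≤ U := by
    by_cases h : i ∈ J
    · exact (hg h).trans_le (hfU _)
    · exact (hg' h).le
  have hgcard {i : ι} (hi : i ∈ insert k J) : Nat.card (g i) = d i := by
    by_cases h : i ∈ J
    · rw [hg h, hcard]
    · rw [hg' h, hU, eq_of_notMem hi h]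
  have hgk : g k = U :=
    Subgroup.eq_of_le_of_card_ge (hgU k) (by rw [hU, hgcard (Finset.mem_insert_self k J)])
  refine ⟨⟨fun i ↦ g i, ?_, fun i ↦ hgcard i.2, fun i ↦ hgU i⟩, hgk, fun i ↦ hg i.2⟩
  rintro ⟨i, hi⟩ ⟨j, hj⟩ hij
  rcases Finset.mem_insert.mp hi with rfl | hiJ
  · exact (hgU j).trans hgk.ge
  by_cases hjJ : j ∈ J
  · simpa only [hg hiJ, hg hjJ] using hf ⟨i, hiJ⟩ ⟨j, hjJ⟩ hij
  · obtain rfl : i = j := hij.antisymm (eq_of_notMem hj hjJ ▸ hJ i hiJ)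
    exact le_rfl

/-- Splits a chain over `insert k J`, with `k` below `J`, into its largest member `U` and a chain
inside `U`. If `k ∈ J`, that inner chain again has `U` as its member at `k`, because the orders
agree. -/
noncomputable def subgroupChainInsertEquiv (hJ : ∀ i ∈ J, k ≤ i) (H : Subgroup G) :
    SubgroupChain d (insert k J) H ≃
      Σ U : {U : Subgroup G // Nat.card U = d k ∧ U ≤ H}, SubgroupChain d J U.1 := by
  have hkJ := Finset.mem_insert_self k J
  have hmem (i : J) : (i : ι) ∈ insert k J := Finset.mem_insert_of_mem i.2
  refine .ofBijective (fun f ↦ ⟨⟨f.1 ⟨k, hkJ⟩, f.2.2.1 _, f.2.2.2 _⟩,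
    fun i ↦ f.1 ⟨i, hmem i⟩, fun i j ↦ f.2.1 ⟨i, hmem i⟩ ⟨j, hmem j⟩,
    fun i ↦ f.2.2.1 ⟨i, hmem i⟩, fun i ↦ f.2.1 _ ⟨i, hmem i⟩ (hJ i i.2)⟩) ⟨?_, ?_⟩
  · intro f g h
    have htop : f.1 ⟨k, hkJ⟩ = g.1 ⟨k, hkJ⟩ := congrArg (fun z ↦ z.1.1) h
    have hrest : (fun i : J ↦ f.1 ⟨i, hmem i⟩) = fun i : J ↦ g.1 ⟨i, hmem i⟩ :=
      congrArg (fun z ↦ z.2.1) h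
    refine Subtype.ext (funext fun ⟨i, hi⟩ ↦ ?_)
    rcases Finset.mem_insert.mp hi with rfl | hiJ
    · exact htop
    · exact congrFun hrest ⟨i, hiJ⟩
  · rintro ⟨⟨U, hU, hUH⟩, f, hf, hcard, hfU⟩
    obtain ⟨g, hgk, hgJ⟩ := exists_subgroupChain_insert_extending hJ hU ⟨f, hf, hcard, hfU⟩
    exact ⟨⟨g.1, g.2.1, g.2.2.1, fun i ↦ (g.2.2.2 i).trans hUH⟩,
      Sigma.subtype_ext (Subtype.ext hgk) (funext hgJ)⟩

lemma card_subgroupChain_insert_of_card_eq (hJ : ∀ i ∈ J, k ≤ i) {H : Subgroup G}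
    (hH : Nat.card H = d k) :
    Nat.card (SubgroupChain d (insert k J) H) = Nat.card (SubgroupChain d J H) := by
  let : Unique {U : Subgroup G // Nat.card U = d k ∧ U ≤ H} :=
    { default := ⟨H, hH, le_rfl⟩
      uniq U := Subtype.ext (Subgroup.eq_of_le_of_card_ge U.2.2 (hH.trans U.2.1.symm).le) }
  exact Nat.card_congr ((subgroupChainInsertEquiv hJ H).trans (.uniqueSigma _))

end Chains

section StabilizerChains

variable (G : Type*) [Group G]

/-- The subsets of `G` of size `c` containing `1`: the sets `M` of the theorem before a condition is
put on their stabilizer. -/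
abbrev PointedSet (c : ℕ) : Type _ := {M : Set G // 1 ∈ M ∧ Nat.card M = c}

/-- The number of pairs of a set `M ∋ 1` of size `c` whose stabilizer has order `d k`, and a chain
over `J` of subgroups of that stabilizer. It is the quantity `a k J` of the recursion on `k`. -/
noncomputable def stabilizerChainCount {ι : Type*} [LE ι] (d : ι → ℕ) (c : ℕ) (k : ι)
    (J : Finset ι) : ℕ :=
  Nat.card (Σ M : {M : PointedSet G c // Nat.card (MulAction.stabilizer G M.1) = d k},
    SubgroupChain d J (MulAction.stabilizer G M.1.1))

variable [Finite G] {ι : Type*} [PartialOrder ι] [DecidableEq ι] {d : ι → ℕ} {k : ι} {J : Finset ι}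

lemma stabilizerChainCount_insert_self (hJ : ∀ i ∈ J, k ≤ i) (c : ℕ) :
    stabilizerChainCount G d c k (insert k J) = stabilizerChainCount G d c k J := by
  have := Fintype.ofFinite {M : PointedSet G c // Nat.card (MulAction.stabilizer G M.1) = d k}
  simp only [stabilizerChainCount, Nat.card_sigma]
  exact Finset.sum_congr rfl fun M _ ↦ card_subgroupChain_insert_of_card_eq hJ M.2

variable {G}

lemma card_sigma_subgroupChain_stabilizer {m r : ℕ} (hG : Nat.card G = d k * r) (hm : m ≠ 0)
    (hJ : ∀ i ∈ J, k ≤ i) :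
    Nat.card (Σ M : PointedSet G (d k * m),
        SubgroupChain d (insert k J) (MulAction.stabilizer G M.1)) =
      (r - 1).choose (m - 1) * Nat.card (SubgroupChain d (insert k J) (⊤ : Subgroup G)) := by
  have swap : (Σ M : PointedSet G (d k * m),
        Σ U : {U : Subgroup G // Nat.card U = d k ∧ U ≤ MulAction.stabilizer G M.1},
          SubgroupChain d J U.1) ≃
      Σ U : {U : Subgroup G // Nat.card U = d k ∧ U ≤ ⊤},
        {M : Set G // U.1 ≤ MulAction.stabilizer G M ∧ 1 ∈ M ∧ Nat.card M = d k * m} ×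
          SubgroupChain d J U.1 :=
    { toFun x := ⟨⟨x.2.1, x.2.1.2.1, le_top⟩, ⟨x.1, x.2.1.2.2, x.1.2⟩, x.2.2⟩
      invFun y := ⟨⟨y.2.1, y.2.1.2.2⟩, ⟨y.1, y.1.2.1, y.2.1.2.1⟩, y.2.2⟩
      left_inv _ := rfl
      right_inv _ := rfl }
  have hcount (U : {U : Subgroup G // Nat.card U = d k ∧ U ≤ ⊤}) :
      Nat.card {M : Set G // U.1 ≤ MulAction.stabilizer G M ∧ 1 ∈ M ∧ Nat.card M = d k * m} =
        (r - 1).choose (m - 1) := by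
    have h := card_stableSets_one_mem (U := U.1) (r := r) (by rw [hG, U.2.1]) hm
    rwa [U.2.1] at h
  have := Fintype.ofFinite {U : Subgroup G // Nat.card U = d k ∧ U ≤ ⊤}
  rw [Nat.card_congr ((Equiv.sigmaCongrRight fun M ↦ subgroupChainInsertEquiv hJ _).trans swap),
    Nat.card_congr (subgroupChainInsertEquiv hJ ⊤)]
  simp only [Nat.card_sigma, Nat.card_prod, hcount, Finset.mul_sum]

end StabilizerChains

section PrimePowerOrders

variable {G : Type*} [Group G] {p s k : ℕ} {J : Finset ℕ}

lemma existsUnique_card_stabilizer_eq (hp : p.Prime) (hk : k ≤ s) {M : Set G}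
    (hM : Nat.card M = p ^ s) {U : Subgroup G} (hU : Nat.card U = p ^ (s - k))
    (hUM : U ≤ MulAction.stabilizer G M) :
    ∃! j, j ∈ Finset.range (k + 1) ∧ Nat.card (MulAction.stabilizer G M) = p ^ (s - j) := by
  obtain ⟨e, hes, he⟩ := (Nat.dvd_prime_pow hp).mp (hM ▸ card_dvd_card_of_le_stabilizer le_rfl)
  have hke : s - k ≤ e := by
    rw [← Nat.pow_dvd_pow_iff_le_right hp.one_lt, ← hU, ← he]
    exact Subgroup.card_dvd_of_le hUM
  simp only [he, Finset.mem_range, Nat.pow_right_inj hp.one_lt]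
  exact ⟨s - e, by omega, by omega⟩

variable [Finite G]

lemma card_sigma_subgroupChain_stabilizer_eq_sum (hp : p.Prime) (hk : k ≤ s) (hkJ : k ∈ J) :
    Nat.card (Σ M : PointedSet G (p ^ s),
        SubgroupChain (fun i ↦ p ^ (s - i)) J (MulAction.stabilizer G M.1)) =
      ∑ j ∈ Finset.range (k + 1), stabilizerChainCount G (fun i ↦ p ^ (s - i)) (p ^ s) j J := by
  rw [card_eq_sum_card_of_existsUnique fun x ↦
    existsUnique_card_stabilizer_eq hp hk x.1.2.2 (x.2.2.2.1 ⟨k, hkJ⟩) (x.2.2.2.2 ⟨k, hkJ⟩)]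
  exact Finset.sum_congr rfl fun j _ ↦ Nat.card_congr <|
    Equiv.subtypeSigmaEquiv _ fun M : PointedSet G (p ^ s) ↦
      Nat.card (MulAction.stabilizer G M.1) = p ^ (s - j)

variable {t n : ℕ}

lemma card_sigma_subgroupChain_stabilizer_eq_bCoeff_mul (hp : p.Prime)
    (hG : Nat.card G = p ^ t * n) (hs : s ≤ t) (hk : k ≤ s) (hJ : ∀ i ∈ J, k ≤ i) :
    (Nat.card (Σ M : PointedSet G (p ^ s),
        SubgroupChain (fun i ↦ p ^ (s - i)) (insert k J) (MulAction.stabilizer G M.1)) : ℤ) =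
      bCoeff p t s n k * chainCount G p s (insert k J) := by
  have hps : p ^ s = p ^ (s - k) * p ^ k := by rw [← pow_add, Nat.sub_add_cancel hk]
  have hGk : Nat.card G = p ^ (s - k) * (p ^ (t - s + k) * n) := by
    rw [hG, ← mul_assoc, ← pow_add]
    congr 2
    omega
  rw [bCoeff, chainCount_eq_card_subgroupChain, hps]
  exact_mod_cast card_sigma_subgroupChain_stabilizer (d := fun i ↦ p ^ (s - i)) hGk
    (pow_ne_zero k hp.ne_zero) hJ

theorem stabilizerChainCount_recursion (hp : p.Prime) (hG : Nat.card G = p ^ t * n) (hs : s ≤ t)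
    (hk : k ≤ s) (hJ : ∀ i ∈ J, k ≤ i) :
    (stabilizerChainCount G (fun i ↦ p ^ (s - i)) (p ^ s) k J : ℤ) =
      bCoeff p t s n k * chainCount G p s (insert k J) -
        ∑ j ∈ Finset.range k,
          (stabilizerChainCount G (fun i ↦ p ^ (s - i)) (p ^ s) j (insert k J) : ℤ) := by
  rw [← card_sigma_subgroupChain_stabilizer_eq_bCoeff_mul hp hG hs hk hJ,
    card_sigma_subgroupChain_stabilizer_eq_sum hp hk (Finset.mem_insert_self k J),
    Finset.sum_range_succ, stabilizerChainCount_insert_self G hJ]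
  push_cast
  ring

lemma card_cosetUnionChains_eq_stabilizerChainCount {l : ℕ} (hJ : ∀ i ∈ J, l ≤ i) :
    Nat.card
        (Σ x : {x : Subgroup G × Set G //
            Nat.card x.1 = p ^ (s - l) ∧ (1 : G) ∈ x.2 ∧ Nat.card x.2 = p ^ s ∧
            Nat.card (MulAction.stabilizer G x.2) = p ^ (s - k) ∧
            ∃ S : Set G, x.2 = ⋃ g ∈ S, (x.1.1 : Set G) * {g}},
          SubgroupChain (fun i ↦ p ^ (s - i)) J x.1.1) =
      stabilizerChainCount G (fun i ↦ p ^ (s - i)) (p ^ s) k (insert l J) := by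
  refine Nat.card_congr (Equiv.trans ?_
    (Equiv.sigmaCongrRight fun M ↦ subgroupChainInsertEquiv hJ _).symm)
  exact
    { toFun x := ⟨⟨⟨x.1.1.2, x.1.2.2.1, x.1.2.2.2.1⟩, x.1.2.2.2.2.1⟩,
        ⟨x.1.1.1, x.1.2.1,
          exists_eq_iUnion_rightCosets_iff_le_stabilizer.mp x.1.2.2.2.2.2⟩, x.2⟩
      invFun y := ⟨⟨(y.2.1.1, y.1.1.1), y.2.1.2.1, y.1.1.2.1, y.1.1.2.2, y.1.2,
        exists_eq_iUnion_rightCosets_iff_le_stabilizer.mpr y.2.1.2.2⟩, y.2.2⟩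
      left_inv _ := rfl
      right_inv _ := rfl }

end PrimePowerOrders

/-- Let `l ∈ [0, s]`, `k ∈ [0, l]` and `Ihat ⊆ [l, s]`.  Summing, over all pairs
`(U, M)` with `U ≤ G` of order `p^(s-l)`, `M ⊆ G`, `1 ∈ M`, `|M| = p^s`,
`|Stab(M)| = p^(s-k)` and `M` a union of right cosets of `U`, the number of chains
of subgroups of `U` of orders `p^(s-i)` for `i ∈ Ihat`, one obtains
`∑_{I ⊆ [0,k], k ∈ I} (-1)^(|I|+1) · b(min I) · N(s - (I ∪ {l} ∪ Ihat))`.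
(The sum over pairs is expressed as the cardinality of a sigma type.) -/
theorem sum_chains_in_U_eq_alternating_sum {G : Type*} [Group G] [Finite G]
    (p t n s l k : ℕ) (hp : p.Prime) (hG : Nat.card G = p ^ t * n) (hn : ¬ p ∣ n)
    (hs : s ≤ t) (hl : l ≤ s) (hk : k ≤ l)
    (Ihat : Finset ℕ) (hIhat : Ihat ⊆ Finset.Icc l s) :
    (Nat.card
        (Σ x : {x : Subgroup G × Set G //
            Nat.card x.1 = p ^ (s - l) ∧ (1 : G) ∈ x.2 ∧ Nat.card x.2 = p ^ s ∧
            Nat.card (MulAction.stabilizer G x.2) = p ^ (s - k) ∧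
            ∃ S : Set G, x.2 = ⋃ g ∈ S, (x.1.1 : Set G) * {g}},
          {f : Ihat → Subgroup G //
            (∀ i j : Ihat, (i : ℕ) ≤ (j : ℕ) → f j ≤ f i) ∧
            (∀ i : Ihat, Nat.card (f i) = p ^ (s - (i : ℕ))) ∧
            ∀ i : Ihat, f i ≤ x.1.1}) : ℤ)
      = ∑ I ∈ ((Finset.range (k + 1)).powerset.filter (fun I => k ∈ I)).attach,
          (-1 : ℤ) ^ (I.1.card + 1) *
            bCoeff p t s n (I.1.min' ⟨k, (Finset.mem_filter.mp I.2).2⟩) *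
            (chainCount G p s (insert l I.1 ∪ Ihat) : ℤ) := by
  have hlow : ∀ i ∈ Ihat, l ≤ i := fun i hi ↦ (Finset.mem_Icc.mp (hIhat hi)).1
  have hklow : ∀ i ∈ insert l Ihat, k ≤ i :=
    (Finset.forall_mem_insert _ _ _).mpr ⟨hk, fun i hi ↦ hk.trans (hlow i hi)⟩
  have hsum := eq_alternating_sum_of_recursion
    (a := fun k J ↦ (stabilizerChainCount G (fun i ↦ p ^ (s - i)) (p ^ s) k J : ℤ))
    (w := fun k J ↦ bCoeff p t s n k * chainCount G p s J)
    (fun _ hj _ hJ ↦ stabilizerChainCount_recursion hp hG hs hj hJ) k (hk.trans hl) _ hklow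
  rw [card_cosetUnionChains_eq_stabilizerChainCount hlow, hsum, ← Finset.sum_attach]
  refine Finset.sum_congr rfl fun I _ ↦ ?_
  rw [smul_eq_mul, mul_assoc, Finset.Nonempty.csInf_eq_min' ⟨k, (Finset.mem_filter.mp I.2).2⟩,
    Finset.insert_union, Finset.union_insert]
end
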